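/- arXiv:1104.1884 — 3 statements merged into one kernel-verified Lean document; each statement's English description precedes it below -/
import Mathlib

section
/- Let f : ℕ → (0,∞) be non-decreasing with f(n) → ∞, and suppose there exists K > 0 such that f(x+y) ≤ K·f(x)·f(y) for all positive integers x, y, and that limsup_{n→∞} (1/n)·log f(n) = 0. Then for every irreducible recurrent discrete-time Markov chain on a finite or countable state space, if E f(T_ii) < ∞ for some state i, then E f(T_jj) < ∞ for every state j. -/
/-!
For `i ≠ j`, let `a` and `b` be the laws of the first entrance into `{i, j}` from `i` at `i` and
at `j` respectively, and `d` and `r` those of the first entrance from `j` at `i` and at `j`.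
Writing `h x y` for the law of the first hitting time of `y` from `x` and `*` for convolution, the
strong Markov property at this entrance gives
`h i i = a + b * h j i`, `h j i = d + r * h j i`, `h i j = b + a * h i j`, `h j j = r + d * h i j`.
As `f` is monotone, both factors of a nonzero convolution with finite `f`-moment have finite
`f`-moment, so `E f(T_ii) < ∞` makes the `f`-moments of `a`, `b`, `d` and `r` finite. As `f` is
submultiplicative, the fourth equation reduces the claim to the `f`-moment of `h i j`.

The third equation is a renewal equation with `∑ a < 1`. Let `g n = sup_k f (n + k) / ρ ^ k`, which
is finite for `ρ > 1` because `f` grows subexponentially, is comparable to `f`, and satisfies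
`g (m + l) ≤ min (ρ ^ m) (K * f m) * g l`. By dominated convergence
`θ = ∑ a m * min (ρ ^ m) (K * f m)` is less than `1` for `ρ` close to `1`. The `g`-moment `G` of
`h i j`, truncated so as to be finite, then satisfies `G ≤ C + θ * G`, a bound which does not depend
on the truncation.
-/

open Filter
open scoped ENNReal

namespace MCPaper

variable {E : Type*}

open Classical in
/-- `hitAvoid P t a n x` is the probability that the chain with transition matrix `P`,
started at `x`, is at `t` at time `n` while avoiding both `t` and `a` at times `1,…,n-1`.
For `t = a` this is the distribution of the first hitting time of `t`. -/
noncomputable def hitAvoid (P : E → E → ℝ≥0∞) (t a : E) : ℕ → E → ℝ≥0∞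
  | 0, _ => 0
  | 1, x => P x t
  | n + 2, x => ∑' k : E, if k = t ∨ k = a then 0 else P x k * hitAvoid P t a (n + 1) k

/-- `firstHit P i j n = P_i(T_ij = n)`, the probability that the first hitting time of `j`
(first return time if `i = j`) starting from `i` equals `n`. -/
noncomputable def firstHit (P : E → E → ℝ≥0∞) (i j : E) (n : ℕ) : ℝ≥0∞ :=
  hitAvoid P j j n i

/-- `P` is a stochastic matrix. -/
def IsStochastic (P : E → E → ℝ≥0∞) : Prop := ∀ i, ∑' j : E, P i j = 1

/-- irreducibility: any state can be reached from any other state. -/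
def IsIrreducible (P : E → E → ℝ≥0∞) : Prop := ∀ i j : E, ∃ n : ℕ, 0 < firstHit P i j n

/-- recurrence: `P_i(T_ii < ∞) = 1` for every state `i`. -/
def IsRecurrent (P : E → E → ℝ≥0∞) : Prop := ∀ i : E, ∑' n : ℕ, firstHit P i i n = 1

/-- the generalized moment `E f(T_ij)` of the first hitting time of `j` from `i`. -/
noncomputable def momGen (f : ℕ → ℝ) (P : E → E → ℝ≥0∞) (i j : E) : ℝ≥0∞ :=
  ∑' n : ℕ, ENNReal.ofReal (f n) * firstHit P i j n

section Convolution

open Finset.HasAntidiagonal (antidiagonal mem_antidiagonal)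

/-- Convolution of two sequences on `ℕ`: the law of a sum of independent times. -/
noncomputable def conv (u v : ℕ → ℝ≥0∞) (n : ℕ) : ℝ≥0∞ :=
  ∑ p ∈ antidiagonal n, u p.1 * v p.2

variable {u v : ℕ → ℝ≥0∞}

lemma conv_comm (u v : ℕ → ℝ≥0∞) : conv u v = conv v u := by
  funext n
  rw [conv, ← Finset.Nat.sum_antidiagonal_swap]
  exact Finset.sum_congr rfl fun p _ => mul_comm _ _

lemma mul_le_conv_add (u v : ℕ → ℝ≥0∞) (m l : ℕ) : u m * v l ≤ conv u v (m + l) :=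
  Finset.single_le_sum (f := fun p : ℕ × ℕ => u p.1 * v p.2) (fun _ _ => zero_le)
    (mem_antidiagonal.2 rfl : (m, l) ∈ antidiagonal (m + l))

lemma conv_apply_zero (u v : ℕ → ℝ≥0∞) : conv u v 0 = u 0 * v 0 := by
  simp [conv]

lemma conv_succ (u v : ℕ → ℝ≥0∞) (n : ℕ) :
    conv u v (n + 1) = u 0 * v (n + 1) + conv (fun m => u (m + 1)) v n :=
  Finset.Nat.sum_antidiagonal_succ

lemma conv_const_mul (c : ℝ≥0∞) (u v : ℕ → ℝ≥0∞) (n : ℕ) :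
    conv (fun m => c * u m) v n = c * conv u v n := by
  simp only [conv, Finset.mul_sum, mul_assoc]

lemma conv_tsum {ι : Type*} (u : ι → ℕ → ℝ≥0∞) (v : ℕ → ℝ≥0∞) (n : ℕ) :
    conv (fun m => ∑' k, u k m) v n = ∑' k, conv (u k) v n := by
  simp only [conv, ← ENNReal.tsum_mul_right]
  exact (Summable.tsum_finsetSum fun _ _ => ENNReal.summable).symm

lemma conv_congr_right {v' : ℕ → ℝ≥0∞} {n : ℕ} (h : ∀ l ≤ n, v l = v' l) :
    conv u v n = conv u v' n :=
  Finset.sum_congr rfl fun _ hp => by rw [h _ (antidiagonal.snd_le hp)]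

end Convolution

section Moment

/-- The moment `∑ n, F n * u n` of a sequence `u` against a weight `F`; for the law `u` of a
possibly infinite time `T` it is `E[F(T); T < ∞]`. -/
noncomputable def moment (F u : ℕ → ℝ≥0∞) : ℝ≥0∞ := ∑' n, F n * u n

variable {F w φ ψ u v : ℕ → ℝ≥0∞} {K : ℝ≥0∞}

lemma moment_add (F u v : ℕ → ℝ≥0∞) : moment F (u + v) = moment F u + moment F v := by
  simp only [moment, Pi.add_apply, mul_add, ENNReal.tsum_add]

lemma moment_const_mul (c : ℝ≥0∞) (F u : ℕ → ℝ≥0∞) :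
    moment (fun n => c * F n) u = c * moment F u := by
  simp only [moment, mul_assoc, ENNReal.tsum_mul_left]

lemma moment_mono (hw : w ≤ φ) (hu : u ≤ v) : moment w u ≤ moment φ v :=
  ENNReal.tsum_le_tsum fun n => mul_le_mul' (hw n) (hu n)

lemma moment_conv (F u v : ℕ → ℝ≥0∞) :
    moment F (conv u v) = ∑' m, ∑' l, F (m + l) * (u m * v l) := by
  rw [← ENNReal.tsum_prod (f := fun m l => F (m + l) * (u m * v l)),
    ← Finset.HasAntidiagonal.sigmaAntidiagonalEquivProd.tsum_eq, ENNReal.tsum_sigma']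
  refine tsum_congr fun n => ?_
  rw [conv, Finset.mul_sum, ← Finset.tsum_subtype]
  refine tsum_congr fun p => ?_
  exact congrArg (fun k => F k * (u p.1.1 * v p.1.2))
    (Finset.HasAntidiagonal.mem_antidiagonal.1 p.2).symm

lemma moment_conv_le (hw : ∀ m l, w (m + l) ≤ φ m * ψ l) (u v : ℕ → ℝ≥0∞) :
    moment w (conv u v) ≤ moment φ u * moment ψ v :=
  calc moment w (conv u v) = ∑' m, ∑' l, w (m + l) * (u m * v l) := moment_conv w u v
    _ ≤ ∑' m, ∑' l, φ m * u m * (ψ l * v l) := by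
      refine ENNReal.tsum_le_tsum fun m => ENNReal.tsum_le_tsum fun l => ?_
      rw [mul_mul_mul_comm]
      exact mul_le_mul_left (hw m l) _
    _ = moment φ u * moment ψ v := by
      simp only [moment, ENNReal.tsum_mul_left, ENNReal.tsum_mul_right]

lemma moment_mul_le_moment_conv (hF : Monotone F) (u v : ℕ → ℝ≥0∞) (l : ℕ) :
    moment F u * v l ≤ moment F (conv u v) := by
  rw [moment_conv, moment, ← ENNReal.tsum_mul_right]
  refine ENNReal.tsum_le_tsum fun m => ?_
  calc F m * u m * v l ≤ F (m + l) * (u m * v l) := by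
        rw [mul_assoc]
        exact mul_le_mul_left (hF (Nat.le_add_right m l)) _
    _ ≤ ∑' l, F (m + l) * (u m * v l) := ENNReal.le_tsum l

lemma moment_lt_top_of_conv_left (hF : Monotone F) (hv : ∃ l, v l ≠ 0)
    (h : moment F (conv u v) < ⊤) : moment F u < ⊤ :=
  hv.elim fun l hl =>
    ENNReal.lt_top_of_mul_ne_top_left ((moment_mul_le_moment_conv hF u v l).trans_lt h).ne hl

lemma moment_lt_top_of_conv_right (hF : Monotone F) (hu : ∃ m, u m ≠ 0)
    (h : moment F (conv u v) < ⊤) : moment F v < ⊤ :=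
  moment_lt_top_of_conv_left hF hu (conv_comm u v ▸ h)

lemma moment_conv_lt_top (hK : K ≠ ⊤) (hsub : ∀ m l, F (m + l) ≤ K * F m * F l)
    (hu : moment F u < ⊤) (hv : moment F v < ⊤) : moment F (conv u v) < ⊤ := by
  refine (moment_conv_le hsub u v).trans_lt (ENNReal.mul_lt_top ?_ hv)
  rw [moment_const_mul]
  exact ENNReal.mul_lt_top hK.lt_top hu

lemma ne_top_of_moment_lt_top {n : ℕ} (hF : F n ≠ 0) (hu : moment F u < ⊤) : u n ≠ ⊤ :=
  (ENNReal.lt_top_of_mul_ne_top_right ((ENNReal.le_tsum n).trans_lt hu).ne hF).ne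

end Moment

section Renewal

variable {a b h : ℕ → ℝ≥0∞}

lemma ne_top_of_renewal (ha0 : a 0 = 0) (ha : ∀ n, a n ≠ ⊤) (hb : ∀ n, b n ≠ ⊤)
    (hren : h = b + conv a h) (n : ℕ) : h n ≠ ⊤ := by
  induction n using Nat.strong_induction_on with
  | _ n ih =>
    rw [hren, Pi.add_apply, conv]
    refine ENNReal.add_ne_top.2 ⟨hb n, ENNReal.sum_ne_top.2 fun p hp => ?_⟩
    rw [Finset.HasAntidiagonal.mem_antidiagonal] at hp
    rcases Nat.eq_zero_or_pos p.1 with hp0 | hp0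
    · simp [hp0, ha0]
    · exact ENNReal.mul_ne_top (ha p.1) (ih p.2 (by omega))

lemma eq_zero_of_eq_conv (ha0 : a 0 = 0) (hren : h = conv a h) : h = 0 := by
  funext n
  induction n using Nat.strong_induction_on with
  | _ n ih =>
    rw [hren, conv]
    refine Finset.sum_eq_zero fun p hp => ?_
    rw [Finset.HasAntidiagonal.mem_antidiagonal] at hp
    rcases Nat.eq_zero_or_pos p.1 with hp0 | hp0
    · rw [hp0, ha0, zero_mul]
    · rw [ih p.2 (by omega), Pi.zero_apply, mul_zero]

lemma indicator_Iio_le_of_renewal (hren : h = b + conv a h) (N : ℕ) :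
    (Set.Iio N).indicator h ≤ b + conv a ((Set.Iio N).indicator h) := by
  refine Set.indicator_le' (fun n hn => ?_) fun _ _ => zero_le
  have htrunc : conv a h n = conv a ((Set.Iio N).indicator h) n :=
    conv_congr_right fun l hl => (Set.indicator_of_mem (Set.mem_Iio.2 (hl.trans_lt hn)) h).symm
  rw [Pi.add_apply, ← htrunc]
  exact (congrFun hren n).le

end Renewal

section RenewalMoment

open scoped NNReal

variable {F w φ a b h u : ℕ → ℝ≥0∞} {K : ℝ≥0∞}

lemma le_div_one_sub_of_le_add_mul {x B θ : ℝ≥0∞} (hx : x ≠ ⊤) (hθ : θ < 1)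
    (h : x ≤ B + θ * x) : x ≤ B / (1 - θ) := by
  rw [ENNReal.le_div_iff_mul_le (.inl (tsub_pos_of_lt hθ).ne')
    (.inl (ENNReal.sub_ne_top ENNReal.one_ne_top)), ENNReal.mul_sub fun _ _ => hx, mul_one,
    tsub_le_iff_right, mul_comm x]
  exact h

lemma moment_le_of_le_add_conv (hw : ∀ m l, w (m + l) ≤ φ m * w l) (hφ : moment φ a < 1)
    (hu : u ≤ b + conv a u) (hwu : moment w u ≠ ⊤) :
    moment w u ≤ moment w b / (1 - moment φ a) :=
  le_div_one_sub_of_le_add_mul hwu hφ <|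
    calc moment w u ≤ moment w (b + conv a u) := moment_mono le_rfl hu
      _ = moment w b + moment w (conv a u) := moment_add w b _
      _ ≤ moment w b + moment φ a * moment w u := by gcongr; exact moment_conv_le hw a u

lemma moment_indicator_Iio (w h : ℕ → ℝ≥0∞) (N : ℕ) :
    moment w ((Set.Iio N).indicator h) = ∑ n ∈ Finset.range N, w n * h n := by
  rw [sum_eq_tsum_indicator, Finset.coe_range]
  exact tsum_congr fun n => (Set.indicator_mul_right (Set.Iio N) w h).symm

lemma moment_le_of_renewal (hw : ∀ m l, w (m + l) ≤ φ m * w l) (hφ : moment φ a < 1)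
    (hren : h = b + conv a h) (hwtop : ∀ n, w n ≠ ⊤) (hh : ∀ n, h n ≠ ⊤) :
    moment w h ≤ moment w b / (1 - moment φ a) := by
  refine ENNReal.tsum_le_of_sum_range_le fun N => ?_
  rw [← moment_indicator_Iio]
  refine moment_le_of_le_add_conv hw hφ (indicator_Iio_le_of_renewal hren N) ?_
  rw [moment_indicator_Iio]
  exact ENNReal.sum_ne_top.2 fun n _ => ENNReal.mul_ne_top (hwtop n) (hh n)

/-- The least weight `w ≥ F` with `w (n + 1) ≤ ρ * w n`. -/
noncomputable def expEnvelope (F : ℕ → ℝ≥0∞) (ρ : ℝ≥0) (n : ℕ) : ℝ≥0∞ :=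
  ⨆ k, F (n + k) / (ρ : ℝ≥0∞) ^ k

variable {ρ : ℝ≥0}

lemma expEnvelope_zero (F : ℕ → ℝ≥0∞) (ρ : ℝ≥0) :
    expEnvelope F ρ 0 = ⨆ k, F k / (ρ : ℝ≥0∞) ^ k := by
  simp only [expEnvelope, zero_add]

lemma le_expEnvelope (F : ℕ → ℝ≥0∞) (ρ : ℝ≥0) : F ≤ expEnvelope F ρ := fun n =>
  le_iSup_of_le 0 (by simp)

lemma expEnvelope_add_le_pow_mul (hρ : ρ ≠ 0) (F : ℕ → ℝ≥0∞) (m l : ℕ) :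
    expEnvelope F ρ (m + l) ≤ (ρ : ℝ≥0∞) ^ m * expEnvelope F ρ l := by
  have hρm : (ρ : ℝ≥0∞) ^ m ≠ 0 := pow_ne_zero m (ENNReal.coe_ne_zero.2 hρ)
  have hρm' : (ρ : ℝ≥0∞) ^ m ≠ ⊤ := ENNReal.pow_ne_top ENNReal.coe_ne_top
  refine iSup_le fun k => ?_
  calc F (m + l + k) / (ρ : ℝ≥0∞) ^ k
      = ρ ^ m * (F (l + (m + k)) / (ρ : ℝ≥0∞) ^ (m + k)) := by
        rw [pow_add, ← mul_div_assoc, ENNReal.mul_div_mul_left _ _ hρm hρm', ← add_assoc,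
          add_comm l m]
    _ ≤ ρ ^ m * expEnvelope F ρ l := by
        gcongr
        exact le_iSup (fun k => F (l + k) / (ρ : ℝ≥0∞) ^ k) (m + k)

lemma expEnvelope_add_le_mul_expEnvelope (hsub : ∀ m l, F (m + l) ≤ K * F m * F l) (ρ : ℝ≥0)
    (m l : ℕ) : expEnvelope F ρ (m + l) ≤ K * F m * expEnvelope F ρ l := by
  simp only [expEnvelope, ENNReal.mul_iSup, ← mul_div_assoc, add_assoc]
  gcongr
  exact hsub m _

lemma expEnvelope_ne_top (hρ : ρ ≠ 0) (hgrowth : ⨆ k, F k / (ρ : ℝ≥0∞) ^ k ≠ ⊤) (n : ℕ) :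
    expEnvelope F ρ n ≠ ⊤ := by
  refine ne_top_of_le_ne_top (ENNReal.mul_ne_top (ENNReal.pow_ne_top ENNReal.coe_ne_top) ?_)
    (expEnvelope_add_le_pow_mul hρ F n 0)
  rwa [expEnvelope_zero]

lemma moment_expEnvelope_lt_top (hK : K ≠ ⊤) (hsub : ∀ m l, F (m + l) ≤ K * F m * F l)
    (hgrowth : ⨆ k, F k / (ρ : ℝ≥0∞) ^ k ≠ ⊤) (hu : moment F u < ⊤) :
    moment (expEnvelope F ρ) u < ⊤ := by
  have hle : expEnvelope F ρ ≤ fun n => (K * ⨆ k, F k / (ρ : ℝ≥0∞) ^ k) * F n := fun n =>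
    calc expEnvelope F ρ n ≤ K * F n * expEnvelope F ρ 0 :=
          expEnvelope_add_le_mul_expEnvelope hsub ρ n 0
      _ = (K * ⨆ k, F k / (ρ : ℝ≥0∞) ^ k) * F n := by rw [expEnvelope_zero, mul_right_comm]
  refine (moment_mono hle le_rfl).trans_lt ?_
  rw [moment_const_mul]
  exact ENNReal.mul_lt_top (ENNReal.mul_lt_top hK.lt_top hgrowth.lt_top) hu

open scoped Topology in
lemma exists_moment_min_pow_lt_one (hF : moment F a ≠ ⊤) (ha : ∑' n, a n < 1) :
    ∃ ρ : ℝ≥0, 1 < ρ ∧ moment (fun m => min ((ρ : ℝ≥0∞) ^ m) (F m)) a < 1 := by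
  have hlim : Tendsto (fun ρ : ℝ≥0 => moment (fun m => min ((ρ : ℝ≥0∞) ^ m) (F m)) a) (𝓝[>] 1)
      (𝓝 (moment (fun m => min 1 (F m)) a)) := by
    simp only [moment, ← MeasureTheory.lintegral_count] at hF ⊢
    refine MeasureTheory.tendsto_lintegral_filter_of_dominated_convergence (fun m => F m * a m)
      (.of_forall fun _ => measurable_of_countable _)
      (.of_forall fun _ => .of_forall fun m => mul_le_mul_left (min_le_right _ _) _) hF
      (.of_forall fun m => ?_)
    have hpow : Tendsto (fun ρ : ℝ≥0 => (ρ : ℝ≥0∞) ^ m) (𝓝[>] 1) (𝓝 1) := by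
      have : Continuous fun ρ : ℝ≥0 => (ρ : ℝ≥0∞) ^ m := by fun_prop
      simpa using (this.tendsto 1).mono_left nhdsWithin_le_nhds
    exact ENNReal.Tendsto.mul_const (hpow.min tendsto_const_nhds)
      (.inr ((ENNReal.le_tsum m).trans_lt (ha.trans ENNReal.one_lt_top)).ne)
  have hlt : moment (fun m => min 1 (F m)) a < 1 :=
    (ENNReal.tsum_le_tsum fun m => mul_le_of_le_one_left' (min_le_left _ _)).trans_lt ha
  exact ((eventually_mem_nhdsWithin).and (hlim.eventually_lt_const hlt)).exists

lemma moment_lt_top_of_renewal (hK : K ≠ ⊤) (hsub : ∀ m l, F (m + l) ≤ K * F m * F l)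
    (hF0 : ∀ n, F n ≠ 0) (hgrowth : ∀ ρ : ℝ≥0, 1 < ρ → ⨆ k, F k / (ρ : ℝ≥0∞) ^ k ≠ ⊤)
    (ha0 : a 0 = 0) (ha : moment F a < ⊤) (hb : moment F b < ⊤) (ha1 : ∑' n, a n < 1)
    (hren : h = b + conv a h) : moment F h < ⊤ := by
  have hKF : moment (fun n => K * F n) a ≠ ⊤ := by
    rw [moment_const_mul]
    exact ENNReal.mul_ne_top hK ha.ne
  obtain ⟨ρ, hρ, hlt⟩ := exists_moment_min_pow_lt_one hKF ha1
  have hρ0 : ρ ≠ 0 := (zero_lt_one.trans hρ).ne'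
  have hw (m l : ℕ) :
      expEnvelope F ρ (m + l) ≤ min ((ρ : ℝ≥0∞) ^ m) (K * F m) * expEnvelope F ρ l := by
    rw [min_mul]
    exact le_min (expEnvelope_add_le_pow_mul hρ0 F m l)
      (expEnvelope_add_le_mul_expEnvelope hsub ρ m l)
  have hh : ∀ n, h n ≠ ⊤ := ne_top_of_renewal ha0 (fun n => ne_top_of_moment_lt_top (hF0 n) ha)
    (fun n => ne_top_of_moment_lt_top (hF0 n) hb) hren
  calc moment F h ≤ moment (expEnvelope F ρ) h := moment_mono (le_expEnvelope F ρ) le_rfl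
    _ ≤ moment (expEnvelope F ρ) b / (1 - _) :=
        moment_le_of_renewal hw hlt hren (expEnvelope_ne_top hρ0 (hgrowth ρ hρ)) hh
    _ < ⊤ := ENNReal.div_lt_top (moment_expEnvelope_lt_top hK hsub (hgrowth ρ hρ) hb).ne
        (tsub_pos_of_lt hlt).ne'

end RenewalMoment

section TabooHit

variable {P : E → E → ℝ≥0∞} {i j : E}

/-- `tabooHit P i t a n` is the probability that the chain started at `i` is at `t` at time `n`
while avoiding both `t` and `a` at times `1,…,n-1`: this is `hitAvoid` with `n` as last argument, so
that `tabooHit P i t a` is the law of the first entrance into `{t, a}`, restricted to the event that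
it takes place at `t`. -/
noncomputable def tabooHit (P : E → E → ℝ≥0∞) (i t a : E) (n : ℕ) : ℝ≥0∞ := hitAvoid P t a n i

lemma tabooHit_zero (P : E → E → ℝ≥0∞) (i t a : E) : tabooHit P i t a 0 = 0 := rfl

lemma tabooHit_one (P : E → E → ℝ≥0∞) (i t a : E) : tabooHit P i t a 1 = P i t := rfl

open Classical in
lemma tabooHit_add_two (P : E → E → ℝ≥0∞) (i t a : E) (n : ℕ) :
    tabooHit P i t a (n + 2) =
      ∑' k, if k = t ∨ k = a then 0 else P i k * tabooHit P k t a (n + 1) := rfl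

lemma firstHit_eq_tabooHit (P : E → E → ℝ≥0∞) (i t : E) : firstHit P i t = tabooHit P i t t := rfl

open Classical in
lemma conv_tabooHit_add_two (P : E → E → ℝ≥0∞) (i t a : E) (v : ℕ → ℝ≥0∞) (n : ℕ) :
    conv (tabooHit P i t a) v (n + 2) = P i t * v (n + 1) +
      ∑' k, if k = t ∨ k = a then 0 else P i k * conv (tabooHit P k t a) v (n + 1) := by
  simp only [conv_succ, tabooHit_zero, tabooHit_one, tabooHit_add_two, zero_mul, zero_add,
    conv_tsum]
  congr 1
  refine tsum_congr fun k => ?_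
  split_ifs
  · simp [conv]
  · exact conv_const_mul _ _ _ _

lemma firstHit_apply_eq_tabooHit_add_conv (P : E → E → ℝ≥0∞) (hij : i ≠ j) :
    ∀ n x, firstHit P x j n =
      tabooHit P x j i n + conv (tabooHit P x i j) (firstHit P i j) n
  | 0, x => by simp [firstHit_eq_tabooHit, tabooHit_zero, conv_apply_zero]
  | 1, x => by simp [firstHit_eq_tabooHit, tabooHit_zero, tabooHit_one, conv_succ, conv_apply_zero]
  | n + 2, x => by
    classical
    have hdirect_term : P x i * firstHit P i j (n + 1) =
        ∑' k, if k = i then P x k * firstHit P k j (n + 1) else 0 := by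
      simp
    rw [conv_tabooHit_add_two, hdirect_term, firstHit_eq_tabooHit, tabooHit_add_two,
      tabooHit_add_two, ← ENNReal.tsum_add, ← ENNReal.tsum_add]
    refine tsum_congr fun k => ?_
    rw [← firstHit_eq_tabooHit]
    by_cases hki : k = i
    · simp [hki, hij]
    · by_cases hkj : k = j
      · simp [hkj, hij.symm]
      · simp only [hki, hkj, or_self, if_false, zero_add]
        rw [firstHit_apply_eq_tabooHit_add_conv P hij (n + 1) k, mul_add]

lemma firstHit_eq_tabooHit_add_conv (P : E → E → ℝ≥0∞) (hij : i ≠ j) (x : E) :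
    firstHit P x j = tabooHit P x j i + conv (tabooHit P x i j) (firstHit P i j) :=
  funext fun n => firstHit_apply_eq_tabooHit_add_conv P hij n x

lemma exists_tabooHit_ne_zero (hij : i ≠ j) (hhit : ∃ n, 0 < firstHit P i j n) :
    ∃ n, tabooHit P i j i n ≠ 0 := by
  by_contra! hzero
  have hren := firstHit_eq_tabooHit_add_conv P hij i
  rw [show tabooHit P i j i = 0 from funext hzero, zero_add] at hren
  obtain ⟨n, hn⟩ := hhit
  exact hn.ne' (congrFun (eq_zero_of_eq_conv (tabooHit_zero P i i j) hren) n)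

lemma tsum_tabooHit_lt_one (hij : i ≠ j) (hhit : ∃ n, 0 < firstHit P i j n)
    (hback : ∃ n, 0 < firstHit P j i n) (hret : ∑' n, firstHit P i i n ≤ 1) :
    ∑' n, tabooHit P i i j n < 1 := by
  obtain ⟨m, hm⟩ := exists_tabooHit_ne_zero hij hhit
  obtain ⟨l, hl⟩ := hback
  set c := conv (tabooHit P i j i) (firstHit P j i)
  have hsum : ∑' n, tabooHit P i i j n + ∑' n, c n ≤ 1 := by
    rw [← ENNReal.tsum_add]
    exact (congrArg tsum (firstHit_eq_tabooHit_add_conv P hij.symm i)).ge.trans hret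
  have hc : ∑' n, c n ≠ 0 := fun h => mul_ne_zero hm hl.ne' <| le_zero_iff.1 <|
    (mul_le_conv_add _ _ m l).trans (ENNReal.tsum_eq_zero.1 h (m + l)).le
  have hfin : ∑' n, tabooHit P i i j n ≠ ⊤ :=
    ne_top_of_le_ne_top ENNReal.one_ne_top (le_self_add.trans hsum)
  exact (ENNReal.lt_add_right hfin hc).trans_le hsum

end TabooHit

section ReturnTimes

open scoped NNReal

lemma moment_firstHit_self_lt_top {F : ℕ → ℝ≥0∞} {K : ℝ≥0∞} {P : E → E → ℝ≥0∞} {i j : E}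
    (hF : Monotone F) (hF0 : ∀ n, F n ≠ 0) (hK : K ≠ ⊤)
    (hsub : ∀ m l, F (m + l) ≤ K * F m * F l)
    (hgrowth : ∀ ρ : ℝ≥0, 1 < ρ → ⨆ k, F k / (ρ : ℝ≥0∞) ^ k ≠ ⊤)
    (hij : ∃ n, 0 < firstHit P i j n) (hji : ∃ n, 0 < firstHit P j i n)
    (hret : ∑' n, firstHit P i i n ≤ 1) (hi : moment F (firstHit P i i) < ⊤) :
    moment F (firstHit P j j) < ⊤ := by
  rcases eq_or_ne i j with rfl | hne
  · exact hi
  have moment_split (x : E) {s t : E} (hst : s ≠ t) : moment F (firstHit P x t) < ⊤ ↔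
      moment F (tabooHit P x t s) < ⊤ ∧
        moment F (conv (tabooHit P x s t) (firstHit P s t)) < ⊤ := by
    rw [firstHit_eq_tabooHit_add_conv P hst, moment_add, ENNReal.add_lt_top]
  have hji' : ∃ n, firstHit P j i n ≠ 0 := hji.imp fun _ => ne_of_gt
  obtain ⟨h_iij, h_conv_i⟩ := (moment_split i hne.symm).1 hi
  have h_iji : moment F (tabooHit P i j i) < ⊤ := moment_lt_top_of_conv_left hF hji' h_conv_i
  have h_ji : moment F (firstHit P j i) < ⊤ :=
    moment_lt_top_of_conv_right hF (exists_tabooHit_ne_zero hne hij) h_conv_i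
  obtain ⟨h_jij, h_conv_j⟩ := (moment_split j hne.symm).1 h_ji
  have h_jji : moment F (tabooHit P j j i) < ⊤ := moment_lt_top_of_conv_left hF hji' h_conv_j
  have h_ij : moment F (firstHit P i j) < ⊤ :=
    moment_lt_top_of_renewal hK hsub hF0 hgrowth (tabooHit_zero P i i j) h_iij h_iji
      (tsum_tabooHit_lt_one hne hij hji hret) (firstHit_eq_tabooHit_add_conv P hne i)
  exact (moment_split j hne).2 ⟨h_jji, moment_conv_lt_top hK hsub h_jij h_ij⟩

lemma exists_forall_add_le_mul {f : ℕ → ℝ} {K : ℝ} (hpos : ∀ n, 0 < f n)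
    (hsub : ∀ x y : ℕ, 0 < x → 0 < y → f (x + y) ≤ K * f x * f y) :
    ∃ C : ℝ, ∀ m l, f (m + l) ≤ C * f m * f l := by
  have hzero (n : ℕ) : f n ≤ max K (f 0)⁻¹ * f 0 * f n := by
    refine le_mul_of_one_le_left (hpos n).le ?_
    rw [← inv_mul_cancel₀ (hpos 0).ne']
    exact mul_le_mul_of_nonneg_right (le_max_right _ _) (hpos 0).le
  refine ⟨max K (f 0)⁻¹, fun m l => ?_⟩
  rcases Nat.eq_zero_or_pos m with rfl | hm
  · simpa only [zero_add] using hzero l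
  rcases Nat.eq_zero_or_pos l with rfl | hl
  · simpa only [add_zero, mul_right_comm] using hzero m
  refine (hsub m l hm hl).trans ?_
  gcongr
  exacts [(hpos l).le, (hpos m).le, le_max_left _ _]

lemma iSup_ofReal_div_pow_ne_top {f : ℕ → ℝ} (hpos : ∀ n, 0 < f n)
    (hlog : limsup (fun n : ℕ => ((Real.log (f n) / n : ℝ) : EReal)) atTop ≤ 0)
    {ρ : ℝ≥0} (hρ : 1 < ρ) : ⨆ n, ENNReal.ofReal (f n) / (ρ : ℝ≥0∞) ^ n ≠ ⊤ := by
  have hρ0 : 0 < (ρ : ℝ) := zero_lt_one.trans hρ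
  have hlogρ : (0 : EReal) < (Real.log ρ : EReal) := EReal.coe_pos.2 (Real.log_pos hρ)
  have hle : ∀ᶠ n : ℕ in atTop, f n / (ρ : ℝ) ^ n ≤ 1 := by
    filter_upwards [eventually_lt_of_limsup_lt (hlog.trans_lt hlogρ), eventually_gt_atTop 0]
      with n hn hn0
    rw [EReal.coe_lt_coe_iff, div_lt_iff₀ (Nat.cast_pos.2 hn0), mul_comm, ← Real.log_pow] at hn
    exact div_le_one_of_le₀ ((Real.log_lt_log_iff (hpos n) (pow_pos hρ0 n)).1 hn).le
      (pow_pos hρ0 n).le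
  obtain ⟨C, hC⟩ := (isBoundedUnder_of_eventually_le hle).bddAbove_range
  refine ne_top_of_le_ne_top ENNReal.ofReal_ne_top (iSup_le fun n => ?_ : _ ≤ ENNReal.ofReal C)
  rw [← ENNReal.ofReal_coe_nnreal, ← ENNReal.ofReal_pow hρ0.le,
    ← ENNReal.ofReal_div_of_pos (pow_pos hρ0 n)]
  exact ENNReal.ofReal_le_ofReal (hC ⟨n, rfl⟩)

theorem stmt_2_general {f : ℕ → ℝ} (hpos : ∀ n, 0 < f n) (hmono : Monotone f) {K : ℝ}
    (hsub : ∀ x y : ℕ, 0 < x → 0 < y → f (x + y) ≤ K * f x * f y)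
    (hlog : limsup (fun n : ℕ => ((Real.log (f n) / n : ℝ) : EReal)) atTop ≤ 0)
    {P : E → E → ℝ≥0∞} {i j : E} (hij : ∃ n, 0 < firstHit P i j n)
    (hji : ∃ n, 0 < firstHit P j i n) (hret : ∑' n, firstHit P i i n ≤ 1)
    (hi : momGen f P i i < ⊤) : momGen f P j j < ⊤ := by
  obtain ⟨C, hC⟩ := exists_forall_add_le_mul hpos hsub
  refine moment_firstHit_self_lt_top (F := fun n => ENNReal.ofReal (f n)) (K := ENNReal.ofReal C)
    (fun m n hmn => ENNReal.ofReal_le_ofReal (hmono hmn))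
    (fun n => (ENNReal.ofReal_pos.2 (hpos n)).ne') ENNReal.ofReal_ne_top (fun m l => ?_)
    (fun ρ => iSup_ofReal_div_pow_ne_top hpos hlog) hij hji hret hi
  rw [← ENNReal.ofReal_mul' (hpos m).le, ← ENNReal.ofReal_mul' (hpos l).le]
  exact ENNReal.ofReal_le_ofReal (hC m l)

end ReturnTimes

theorem stmt_2 (f : ℕ → ℝ) (hpos : ∀ n, 0 < f n) (hmono : Monotone f)
    (htop : Tendsto f atTop atTop)
    (K : ℝ) (hK : 0 < K)
    (hsub : ∀ x y : ℕ, 0 < x → 0 < y → f (x + y) ≤ K * f x * f y)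
    (hlog : limsup (fun n : ℕ => ((Real.log (f n) / n : ℝ) : EReal)) atTop = 0)
    (S : Type*) [Countable S] (P : S → S → ℝ≥0∞)
    (hP : IsStochastic P) (hirr : IsIrreducible P) (hrec : IsRecurrent P)
    (i : S) (hi : momGen f P i i < ⊤) :
    ∀ j : S, momGen f P j j < ⊤ := fun j =>
  stmt_2_general hpos hmono hsub hlog.le (hirr i j) (hirr j i) (hrec i).le hi

end MCPaper
end

section
/- Let f : ℕ → (0,∞) be non-decreasing with f(n) → ∞, and suppose f belongs to the class G. Then there exists K > 0 such that f(x+y) ≤ K·f(x)·f(y) for all positive integers x, y. -/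
open Filter
open scoped ENNReal

namespace MCPaper

variable {E : Type*}

/-- the class `𝒢`: a finite generalized `f`-moment of the return time of one state implies
finiteness for the return times of all states, for every irreducible recurrent chain. -/
def MemG (f : ℕ → ℝ) : Prop :=
  ∀ (S : Type) [Countable S] (P : S → S → ℝ≥0∞),
    IsStochastic P → IsIrreducible P → IsRecurrent P →
      ∀ i : S, momGen f P i i < ⊤ → ∀ j : S, momGen f P j j < ⊤

/-- the class `ℋ`: finiteness of `E f(T_ij)` and `E f(T_ji)` for a pair of states implies
finiteness of `E f(T_kl)` for all pairs, for every irreducible recurrent chain. -/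
def MemH (f : ℕ → ℝ) : Prop :=
  ∀ (S : Type) [Countable S] (P : S → S → ℝ≥0∞),
    IsStochastic P → IsIrreducible P → IsRecurrent P →
      ∀ i j : S, momGen f P i j < ⊤ → momGen f P j i < ⊤ →
        ∀ k l : S, momGen f P k l < ⊤

/-!
Let `F = ENNReal.ofReal ∘ f` and let a chain jump from a base state `o` according to a law `q` of
full support, while from every other state it descends deterministically to `o`, in `ℓ x` steps
from `x`. The excursion through `x` then lasts `ℓ x + 1` steps, so `o` has return moment
`∑ x, q x * F (ℓ x + 1)`. A state `t` that no descent reaches can be returned to after two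
excursions, so its return moment is at least
`q a * q b * q t * F (ℓ t + (ℓ a + 1) + (ℓ b + 1) + 1)`. For `q x` proportional to
`A x / F (ℓ x + 1)` with `∑ x, A x < ∞` the first moment is finite, hence for `f` in the class `𝒢`
the second one is as well, and `A a * A b * (F (x + y) / (F x * F y))` with `x = ℓ a + 1`,
`y = ℓ b + 1` is bounded in `a` and `b`. As the summable `A` is arbitrary, the quotient
`F (x + y) / (F x * F y)` is itself bounded.
-/

section Summable

lemma exists_ne_zero_tsum_ne_top_forall_le {ι κ : Type*} [Countable ι] (u : κ → ι)
    (w : κ → ℝ≥0∞) (hw : ∑' k, w k ≠ ⊤) :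
    ∃ A : ι → ℝ≥0∞, (∀ i, A i ≠ 0) ∧ ∑' i, A i ≠ ⊤ ∧ ∀ k, w k ≤ A (u k) := by
  classical
  obtain ⟨ε, hε_pos, hε_sum⟩ := ENNReal.exists_pos_sum_of_countable one_ne_zero ι
  refine ⟨fun i => ε i + ∑' k, if i = u k then w k else 0, fun i => ?_, ?_, fun k => ?_⟩
  · simp [(hε_pos i).ne']
  · rw [ENNReal.tsum_add, ENNReal.tsum_comm]
    simp_rw [tsum_ite_eq]
    exact ENNReal.add_ne_top.2 ⟨hε_sum.ne_top, hw⟩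
  · calc w k = if u k = u k then w k else 0 := (if_pos rfl).symm
      _ ≤ ∑' l, if u k = u l then w l else 0 := ENNReal.le_tsum k
      _ ≤ _ := le_add_self

/-- If `c` were unbounded, masses `2⁻¹ ^ n` placed at points where `c` exceeds `8 ^ n` would
violate `h`. -/
lemma exists_ne_top_forall_le_of_forall_tsum_ne_top {ι κ : Type*} [Countable ι] (u v : κ → ι)
    (c : κ → ℝ≥0∞)
    (h : ∀ A : ι → ℝ≥0∞, (∀ i, A i ≠ 0) → ∑' i, A i ≠ ⊤ →
      ∃ C ≠ ⊤, ∀ k, A (u k) * A (v k) * c k ≤ C) :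
    ∃ C ≠ ⊤, ∀ k, c k ≤ C := by
  by_contra! hc
  choose k hk using fun n : ℕ => hc (2 ^ n * 2 ^ n * 2 ^ n) (by finiteness)
  have hgeom : ∑' n : ℕ, (2⁻¹ : ℝ≥0∞) ^ n ≠ ⊤ := by simp [ENNReal.tsum_geometric]
  obtain ⟨A, hA_ne, hA_sum, hA⟩ := exists_ne_zero_tsum_ne_top_forall_le (u ∘ k) _ hgeom
  obtain ⟨B, -, hB_sum, hB⟩ := exists_ne_zero_tsum_ne_top_forall_le (v ∘ k) _ hgeom
  obtain ⟨C, hC_top, hC⟩ := h (A + B) (fun i => by simp [hA_ne i])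
    (by simpa [ENNReal.tsum_add] using ⟨hA_sum, hB_sum⟩)
  have hpow_le (n : ℕ) : (2 : ℝ≥0∞) ^ n ≤ C := by
    have hinv : (2⁻¹ : ℝ≥0∞) ^ n * 2 ^ n = 1 := by
      rw [← mul_pow, ENNReal.inv_mul_cancel two_ne_zero ENNReal.ofNat_ne_top, one_pow]
    calc (2 : ℝ≥0∞) ^ n
        = (2⁻¹ ^ n * 2 ^ n) * (2⁻¹ ^ n * 2 ^ n) * 2 ^ n := by rw [hinv, one_mul, one_mul]
      _ = 2⁻¹ ^ n * 2⁻¹ ^ n * (2 ^ n * 2 ^ n * 2 ^ n) := by ring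
      _ ≤ (A + B) (u (k n)) * (A + B) (v (k n)) * c (k n) := by
          gcongr
          · exact (hA n).trans le_self_add
          · exact (hB n).trans le_add_self
          · exact (hk n).le
      _ ≤ C := hC (k n)
  obtain ⟨n, hn⟩ := ENNReal.exists_nat_gt hC_top
  have hn_lt : (n : ℝ≥0∞) < 2 ^ n := mod_cast n.lt_two_pow_self
  exact (hn.trans hn_lt).not_ge (hpow_le n)

end Summable

section HitMoment

/-- The expectation `E g(T_ij)` for an extended nonnegative `g`; for `g = 1` it is the probability
`P_i(T_ij < ∞)` of hitting `j` from `i`. -/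
noncomputable def hitMoment (g : ℕ → ℝ≥0∞) (P : E → E → ℝ≥0∞) (i j : E) : ℝ≥0∞ :=
  ∑' n, g n * firstHit P i j n

lemma momGen_eq_hitMoment (f : ℕ → ℝ) (P : E → E → ℝ≥0∞) (i j : E) :
    momGen f P i j = hitMoment (fun n => ENNReal.ofReal (f n)) P i j :=
  rfl

lemma hitMoment_one (P : E → E → ℝ≥0∞) (i j : E) :
    hitMoment 1 P i j = ∑' n, firstHit P i j n := by
  simp only [hitMoment, Pi.one_apply, one_mul]

lemma hitMoment_eq_tsum_succ (g : ℕ → ℝ≥0∞) (P : E → E → ℝ≥0∞) (i j : E) :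
    hitMoment g P i j = ∑' n, g (n + 1) * firstHit P i j (n + 1) := by
  rw [hitMoment, tsum_eq_zero_add' ENNReal.summable]
  simp only [firstHit, hitAvoid, mul_zero, zero_add]

open Classical in
lemma firstHit_add_two (P : E → E → ℝ≥0∞) (i j : E) (n : ℕ) :
    firstHit P i j (n + 2) = ∑' k, if k = j then 0 else P i k * firstHit P k j (n + 1) := by
  simp only [firstHit, hitAvoid, or_self]

open Classical in
lemma hitMoment_first_step (g : ℕ → ℝ≥0∞) (P : E → E → ℝ≥0∞) (i j : E) :
    hitMoment g P i j =
      ∑' k, P i k * if k = j then g 1 else hitMoment (fun n => g (n + 1)) P k j := by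
  have htail : ∑' n, g (n + 2) * firstHit P i j (n + 2) =
      ∑' k, if k = j then 0 else P i k * hitMoment (fun n => g (n + 1)) P k j := by
    simp_rw [firstHit_add_two, ← ENNReal.tsum_mul_left]
    rw [ENNReal.tsum_comm]
    refine tsum_congr fun k => ?_
    split_ifs
    · simp only [mul_zero, tsum_zero]
    · simp_rw [hitMoment_eq_tsum_succ _ P k, ← ENNReal.tsum_mul_left, mul_left_comm (P i k)]
  rw [hitMoment_eq_tsum_succ, tsum_eq_zero_add' ENNReal.summable, htail,
    ENNReal.tsum_eq_add_tsum_ite (f := fun k => P i k * _) j, if_pos rfl, mul_comm (P i j)]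
  congr 1
  exact tsum_congr fun k => by split_ifs <;> rfl

lemma hitMoment_one_le_one {P : E → E → ℝ≥0∞} (hP : IsStochastic P) (i j : E) :
    hitMoment 1 P i j ≤ 1 := by
  classical
  have hitBefore_le_one (N : ℕ) :
      ∀ i, hitMoment (fun n => if n < N then 1 else 0) P i j ≤ 1 := by
    induction N with
    | zero => simp [hitMoment]
    | succ N ih =>
      intro i
      rw [hitMoment_first_step]
      refine (ENNReal.tsum_le_tsum fun k => mul_le_of_le_one_right' ?_).trans (hP i).le
      simp only [add_lt_add_iff_right, Nat.lt_add_left_iff_pos]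
      split_ifs
      · exact le_rfl
      · exact zero_le_one
      · exact ih k
  rw [hitMoment, ENNReal.tsum_eq_iSup_nat]
  refine iSup_le fun N => le_trans ?_ (hitBefore_le_one N i)
  refine le_trans (Finset.sum_le_sum fun n hn => ?_) (ENNReal.sum_le_tsum (Finset.range N))
  simp [Finset.mem_range.1 hn]

lemma isIrreducible_of_hitMoment_one_ne_zero {P : E → E → ℝ≥0∞}
    (h : ∀ i j, hitMoment 1 P i j ≠ 0) : IsIrreducible P := by
  intro i j
  by_contra! hzero
  apply h i j
  simpa only [hitMoment_one, ENNReal.tsum_eq_zero] using fun n => nonpos_iff_eq_zero.1 (hzero n)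

/-- The minimum principle: the hitting probability is harmonic off `j`, so at a minimum it equals
its average over the next step, in which `j` itself counts with value `1`. -/
lemma hitMoment_one_eq_one_of_forall_le {P : E → E → ℝ≥0∞} (hP : IsStochastic P) {o j : E}
    (hoj : P o j ≠ 0) (hmin : ∀ k, hitMoment 1 P o j ≤ hitMoment 1 P k j) :
    hitMoment 1 P o j = 1 := by
  classical
  refine (hitMoment_one_le_one hP o j).eq_of_not_lt fun hlt => ?_
  have hoj_top : P o j ≠ ⊤ := ENNReal.ne_top_of_tsum_ne_top (by simp [hP o]) j
  have haverage : ∑' k, P o k * hitMoment 1 P o j = hitMoment 1 P o j := by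
    rw [ENNReal.tsum_mul_right, hP o, one_mul]
  have haverage_lt : ∑' k, P o k * hitMoment 1 P o j <
      ∑' k, P o k * if k = j then 1 else hitMoment 1 P k j := by
    refine ENNReal.tsum_lt_tsum (i := j) (haverage.trans_lt hlt).ne_top (fun k => ?_) ?_
    · gcongr
      split_ifs
      · exact hlt.le
      · exact hmin k
    · rw [if_pos rfl]
      exact ENNReal.mul_lt_mul_right hoj hoj_top hlt
  exact (haverage.symm.trans_lt haverage_lt).ne (hitMoment_first_step 1 P o j)

end HitMoment

section JumpChain

variable {S : Type*} {o : S} {d : S → S} {ℓ : S → ℕ} {q : PMF S}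

/-- `IsDescentTime o d ℓ` says that iterating `d` leads from every state `x` to the base state `o`,
for the first time after `ℓ x` steps. The value `d o` is unconstrained. -/
structure IsDescentTime (o : S) (d : S → S) (ℓ : S → ℕ) : Prop where
  base : ℓ o = 0
  step : ∀ x ≠ o, ℓ x = ℓ (d x) + 1

lemma IsDescentTime.induction (hℓ : IsDescentTime o d ℓ) {p : S → Prop} (base : p o)
    (step : ∀ x ≠ o, p (d x) → p x) (x : S) : p x := by
  induction hn : ℓ x using Nat.strong_induction_on generalizing x with
  | _ n ih =>
    by_cases hx : x = o
    · exact hx ▸ base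
    · exact step x hx (ih (ℓ (d x)) (by grind [hℓ.step x hx]) (d x) rfl)

open Classical in
/-- The transition matrix of the chain that jumps from `o` with law `q` and moves by `d` from every
other state. -/
noncomputable def jumpChain (o : S) (d : S → S) (q : PMF S) (x : S) : S → ℝ≥0∞ :=
  if x = o then q else PMF.pure (d x)

lemma isStochastic_jumpChain : IsStochastic (jumpChain o d q) := by
  intro x
  unfold jumpChain
  split_ifs
  · exact q.tsum_coe
  · exact (PMF.pure (d x)).tsum_coe

open Classical in
lemma hitMoment_jumpChain_base (g : ℕ → ℝ≥0∞) (t : S) :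
    hitMoment g (jumpChain o d q) o t = ∑' x, q x *
      if x = t then g 1 else hitMoment (fun n => g (n + 1)) (jumpChain o d q) x t := by
  rw [hitMoment_first_step, jumpChain, if_pos rfl]

open Classical in
lemma hitMoment_jumpChain_of_ne {x : S} (hx : x ≠ o) (g : ℕ → ℝ≥0∞) (t : S) :
    hitMoment g (jumpChain o d q) x t =
      if d x = t then g 1 else hitMoment (fun n => g (n + 1)) (jumpChain o d q) (d x) t := by
  rw [hitMoment_first_step, tsum_eq_single (d x)]
  · simp [jumpChain, hx]
  · intro k hk
    simp [jumpChain, hx, hk]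

lemma IsDescentTime.isIrreducible_jumpChain (hℓ : IsDescentTime o d ℓ) (hq : ∀ x, q x ≠ 0) :
    IsIrreducible (jumpChain o d q) := by
  refine isIrreducible_of_hitMoment_one_ne_zero fun i j => ?_
  induction i using hℓ.induction with
  | base =>
    rw [hitMoment_jumpChain_base]
    intro hzero
    simpa [hq j] using ENNReal.tsum_eq_zero.1 hzero j
  | step x hx ih =>
    rw [hitMoment_jumpChain_of_ne hx]
    split_ifs
    · exact one_ne_zero
    · exact ih

lemma IsDescentTime.isRecurrent_jumpChain (hℓ : IsDescentTime o d ℓ) (hq : ∀ x, q x ≠ 0) :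
    IsRecurrent (jumpChain o d q) := by
  intro j
  have hle (x : S) := hitMoment_one_le_one (isStochastic_jumpChain (o := o) (d := d) (q := q)) x j
  have hmin (x : S) :
      hitMoment 1 (jumpChain o d q) o j ≤ hitMoment 1 (jumpChain o d q) x j := by
    induction x using hℓ.induction with
    | base => exact le_rfl
    | step x hx ih =>
      rw [hitMoment_jumpChain_of_ne hx]
      split_ifs
      · exact hle o
      · exact ih
  have hbase : hitMoment 1 (jumpChain o d q) o j = 1 :=
    hitMoment_one_eq_one_of_forall_le isStochastic_jumpChain (by simpa [jumpChain] using hq j) hmin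
  rw [← hitMoment_one]
  exact (hle j).antisymm (hbase ▸ hmin j)

lemma IsDescentTime.hitMoment_jumpChain_to_base (hℓ : IsDescentTime o d ℓ) {x : S} (hx : x ≠ o)
    (g : ℕ → ℝ≥0∞) : hitMoment g (jumpChain o d q) x o = g (ℓ x) := by
  induction x using hℓ.induction generalizing g with
  | base => exact absurd rfl hx
  | step x _ ih =>
    rw [hitMoment_jumpChain_of_ne hx, hℓ.step x hx]
    split_ifs with hdx
    · rw [hdx, hℓ.base]
    · exact ih hdx _

lemma IsDescentTime.hitMoment_jumpChain_base_base (hℓ : IsDescentTime o d ℓ) (g : ℕ → ℝ≥0∞) :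
    hitMoment g (jumpChain o d q) o o = ∑' x, q x * g (ℓ x + 1) := by
  rw [hitMoment_jumpChain_base]
  refine tsum_congr fun x => ?_
  split_ifs with hx
  · rw [hx, hℓ.base]
  · rw [hℓ.hitMoment_jumpChain_to_base hx]

variable {t : S}

lemma IsDescentTime.hitMoment_jumpChain_of_notMem_range (hℓ : IsDescentTime o d ℓ)
    (ht : t ∉ Set.range d) (x : S) (g : ℕ → ℝ≥0∞) :
    hitMoment g (jumpChain o d q) x t =
      hitMoment (fun n => g (n + ℓ x)) (jumpChain o d q) o t := by
  induction x using hℓ.induction generalizing g with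
  | base => simp only [hℓ.base, add_zero]
  | step x hx ih =>
    rw [hitMoment_jumpChain_of_ne hx, if_neg fun h => ht ⟨x, h⟩, ih, hℓ.step x hx]
    simp only [add_assoc]

lemma IsDescentTime.mul_hitMoment_jumpChain_base_le (hℓ : IsDescentTime o d ℓ)
    (ht : t ∉ Set.range d) {a : S} (ha : a ≠ t) (g : ℕ → ℝ≥0∞) :
    q a * hitMoment (fun n => g (n + (ℓ a + 1))) (jumpChain o d q) o t ≤
      hitMoment g (jumpChain o d q) o t := by
  classical
  rw [hitMoment_jumpChain_base g]
  refine le_trans (le_of_eq ?_) (ENNReal.le_tsum a)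
  rw [if_neg ha, hℓ.hitMoment_jumpChain_of_notMem_range ht a]
  simp only [add_assoc]

lemma mul_le_hitMoment_jumpChain_base (g : ℕ → ℝ≥0∞) :
    q t * g 1 ≤ hitMoment g (jumpChain o d q) o t := by
  classical
  rw [hitMoment_jumpChain_base]
  exact le_trans (by rw [if_pos rfl]) (ENNReal.le_tsum t)

/-- The path behind the bound is `t → o → a → o → b → o → t`. -/
lemma IsDescentTime.mul_le_hitMoment_jumpChain_self (hℓ : IsDescentTime o d ℓ)
    (ht : t ∉ Set.range d) {a b : S} (ha : a ≠ t) (hb : b ≠ t) (g : ℕ → ℝ≥0∞) :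
    q a * (q b * (q t * g (1 + (ℓ b + 1) + (ℓ a + 1) + ℓ t))) ≤
      hitMoment g (jumpChain o d q) t t := by
  rw [hℓ.hitMoment_jumpChain_of_notMem_range ht t]
  refine le_trans ?_ (hℓ.mul_hitMoment_jumpChain_base_le ht ha _)
  gcongr
  refine le_trans ?_ (hℓ.mul_hitMoment_jumpChain_base_le ht hb _)
  gcongr
  exact mul_le_hitMoment_jumpChain_base _

end JumpChain

section ClassG

variable {f : ℕ → ℝ} {S : Type} [Countable S] {o t : S} {d : S → S} {ℓ : S → ℕ}

lemma MemG.exists_forall_pmf_mul_le (hG : MemG f) (hmono : Monotone f)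
    (hℓ : IsDescentTime o d ℓ) (ht : t ∉ Set.range d) {q : PMF S} (hq : ∀ x, q x ≠ 0)
    (hsum : ∑' x, q x * ENNReal.ofReal (f (ℓ x + 1)) ≠ ⊤) :
    ∃ C ≠ ⊤, ∀ a ≠ t, ∀ b ≠ t,
      q a * q b * ENNReal.ofReal (f (ℓ a + 1 + (ℓ b + 1))) ≤ C := by
  have hbase : momGen f (jumpChain o d q) o o < ⊤ := by
    rw [momGen_eq_hitMoment, hℓ.hitMoment_jumpChain_base_base]
    exact hsum.lt_top
  have hreturn : momGen f (jumpChain o d q) t t < ⊤ :=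
    hG S _ isStochastic_jumpChain (hℓ.isIrreducible_jumpChain hq) (hℓ.isRecurrent_jumpChain hq)
      o hbase t
  refine ⟨momGen f (jumpChain o d q) t t / q t, ENNReal.div_ne_top hreturn.ne (hq t),
    fun a ha b hb => ?_⟩
  rw [ENNReal.le_div_iff_mul_le (.inl (hq t)) (.inl (q.apply_ne_top t)), momGen_eq_hitMoment]
  calc q a * q b * ENNReal.ofReal (f (ℓ a + 1 + (ℓ b + 1))) * q t
      = q a * (q b * (q t * ENNReal.ofReal (f (ℓ a + 1 + (ℓ b + 1))))) := by ring
    _ ≤ q a * (q b * (q t * ENNReal.ofReal (f (1 + (ℓ b + 1) + (ℓ a + 1) + ℓ t)))) := by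
        gcongr
        exact hmono (by omega)
    _ ≤ _ := hℓ.mul_le_hitMoment_jumpChain_self ht ha hb fun n => ENNReal.ofReal (f n)

lemma MemG.exists_forall_mul_le (hG : MemG f) (hmono : Monotone f) (hℓ : IsDescentTime o d ℓ)
    (ht : t ∉ Set.range d) {w : S → ℝ≥0∞} (hw : ∀ x, w x ≠ 0) (hw_sum : ∑' x, w x ≠ ⊤)
    (hsum : ∑' x, w x * ENNReal.ofReal (f (ℓ x + 1)) ≠ ⊤) :
    ∃ C ≠ ⊤, ∀ a ≠ t, ∀ b ≠ t,
      w a * w b * ENNReal.ofReal (f (ℓ a + 1 + (ℓ b + 1))) ≤ C := by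
  set Z := ∑' x, w x
  have hZ : Z ≠ 0 := fun h => hw o (ENNReal.tsum_eq_zero.1 h o)
  set q : PMF S := PMF.normalize w hZ hw_sum
  have hq (x : S) : q x = Z⁻¹ * w x := (PMF.normalize_apply ..).trans (mul_comm ..)
  have hqZ (x : S) : w x = Z * q x := by rw [hq, ENNReal.mul_inv_cancel_left hZ hw_sum]
  have hq_sum : ∑' x, q x * ENNReal.ofReal (f (ℓ x + 1)) ≠ ⊤ := by
    simp_rw [hq, mul_assoc, ENNReal.tsum_mul_left]
    exact ENNReal.mul_ne_top (ENNReal.inv_ne_top.2 hZ) hsum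
  obtain ⟨C, hC_top, hC⟩ := hG.exists_forall_pmf_mul_le hmono hℓ ht
    (fun x => right_ne_zero_of_mul (hqZ x ▸ hw x)) hq_sum
  refine ⟨Z * Z * C, by finiteness, fun a ha b hb => ?_⟩
  calc w a * w b * ENNReal.ofReal (f (ℓ a + 1 + (ℓ b + 1)))
      = Z * Z * (q a * q b * ENNReal.ofReal (f (ℓ a + 1 + (ℓ b + 1)))) := by
        rw [hqZ a, hqZ b]
        ring
    _ ≤ Z * Z * C := by
        gcongr
        exact hC a ha b hb

lemma MemG.exists_forall_mul_div_le (hG : MemG f) (hpos : ∀ n, 0 < f n) (hmono : Monotone f)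
    (hℓ : IsDescentTime o d ℓ) (ht : t ∉ Set.range d) {A : S → ℝ≥0∞} (hA : ∀ x, A x ≠ 0)
    (hA_sum : ∑' x, A x ≠ ⊤) :
    ∃ C ≠ ⊤, ∀ a ≠ t, ∀ b ≠ t, A a * A b *
      ENNReal.ofReal (f (ℓ a + 1 + (ℓ b + 1)) / (f (ℓ a + 1) * f (ℓ b + 1))) ≤ C := by
  set F : ℕ → ℝ≥0∞ := fun n => ENNReal.ofReal (f n) with hF_def
  have hF (n : ℕ) : F n ≠ 0 := by simpa [F] using hpos n
  have hF_top (n : ℕ) : F n ≠ ⊤ := ENNReal.ofReal_ne_top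
  have hw_sum : ∑' x, A x / F (ℓ x + 1) ≠ ⊤ := by
    refine ne_top_of_le_ne_top (ENNReal.div_ne_top hA_sum (hF 0)) ?_
    simp_rw [div_eq_mul_inv, ← ENNReal.tsum_mul_right]
    gcongr
    exact ENNReal.ofReal_le_ofReal (hmono (Nat.zero_le _))
  have hsum : ∑' x, A x / F (ℓ x + 1) * F (ℓ x + 1) ≠ ⊤ := by
    simpa only [ENNReal.div_mul_cancel (hF _) (hF_top _)] using hA_sum
  obtain ⟨C, hC_top, hC⟩ := hG.exists_forall_mul_le hmono hℓ ht
    (fun x => ENNReal.div_ne_zero.2 ⟨hA x, hF_top _⟩) hw_sum hsum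
  refine ⟨C, hC_top, fun a ha b hb => (hC a ha b hb).trans' (le_of_eq ?_)⟩
  rw [ENNReal.ofReal_div_of_pos (mul_pos (hpos _) (hpos _)), ENNReal.ofReal_mul (hpos _).le]
  simp only [div_eq_mul_inv, hF_def]
  rw [ENNReal.mul_inv (.inl (hF _)) (.inl (hF_top _))]
  ring

end ClassG

/-- The descent of the test chain, with base state `some 0`: excursions through the states
`some n` realise all lengths `n + 1`, and the extra state `none` can be entered only by a jump. -/
def optionDescent : Option ℕ → Option ℕ
  | none => some 0
  | some n => some (n - 1)

lemma isDescentTime_optionDescent :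
    IsDescentTime (some 0) optionDescent fun x => x.getD 1 where
  base := rfl
  step
    | none, _ => rfl
    | some 0, h => absurd rfl h
    | some (_ + 1), _ => rfl

lemma none_notMem_range_optionDescent : none ∉ Set.range optionDescent := by
  rintro ⟨_ | n, h⟩ <;> cases h

lemma MemG.exists_forall_div_le {f : ℕ → ℝ} (hG : MemG f) (hpos : ∀ n, 0 < f n)
    (hmono : Monotone f) :
    ∃ C ≠ ⊤, ∀ k : ℕ × ℕ,
      ENNReal.ofReal (f (k.1 + 1 + (k.2 + 1)) / (f (k.1 + 1) * f (k.2 + 1))) ≤ C := by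
  refine exists_ne_top_forall_le_of_forall_tsum_ne_top (some ∘ Prod.fst) (some ∘ Prod.snd) _
    fun A hA hA_sum => ?_
  obtain ⟨C, hC_top, hC⟩ := hG.exists_forall_mul_div_le hpos hmono isDescentTime_optionDescent
    none_notMem_range_optionDescent hA hA_sum
  exact ⟨C, hC_top, fun k => hC (some k.1) (by simp) (some k.2) (by simp)⟩

theorem stmt_4 (f : ℕ → ℝ) (hpos : ∀ n, 0 < f n) (hmono : Monotone f)
    (htop : Tendsto f atTop atTop) (hG : MemG f) :
    ∃ K : ℝ, 0 < K ∧ ∀ x y : ℕ, 0 < x → 0 < y → f (x + y) ≤ K * f x * f y := by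
  obtain ⟨C, hC_top, hC⟩ := hG.exists_forall_div_le hpos hmono
  have hratio (x y : ℕ) (hx : 0 < x) (hy : 0 < y) : f (x + y) / (f x * f y) ≤ C.toReal := by
    obtain ⟨a, rfl⟩ := Nat.exists_eq_add_of_le' hx
    obtain ⟨b, rfl⟩ := Nat.exists_eq_add_of_le' hy
    exact (ENNReal.ofReal_le_iff_le_toReal hC_top).1 (hC (a, b))
  have hprod (x y : ℕ) : 0 < f x * f y := mul_pos (hpos x) (hpos y)
  refine ⟨C.toReal, (div_pos (hpos 2) (hprod 1 1)).trans_le (hratio 1 1 one_pos one_pos),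
    fun x y hx hy => ?_⟩
  rw [mul_assoc]
  exact (div_le_iff₀ (hprod x y)).1 (hratio x y hx hy)

end MCPaper
end

section
/- Let f : ℕ → (0,∞) be non-decreasing with f(n) → ∞, and let an irreducible recurrent discrete-time Markov chain on a finite or countable state space be given. If E f(T_ii) < ∞ for a state i, then E f(T_ji) < ∞ for every state j. -/
/-!
A first step from `x` to `k ≠ i` shows `P x k * P_k(T_ki = n) ≤ P_x(T_xi = n + 1)`, so for
non-decreasing `f` we get `P x k * E f(T_ki) ≤ E f(T_xi)`. Hence finiteness of `E f(T_xi)` passes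
from `x` to every state that `x` can step to, and therefore from `i` to every state accessible
from `i`. Paths through `i` cause no trouble, because `E f(T_ii) < ∞` is the assumption itself.
-/

open Filter
open scoped ENNReal

namespace MCPaper

variable {E : Type*}

section

variable {P : E → E → ℝ≥0∞} {f : ℕ → ℝ} {t a x k i j : E} {n : ℕ}

lemma mul_hitAvoid_le_hitAvoid_succ (hkt : k ≠ t) (hka : k ≠ a) (n : ℕ) :
    P x k * hitAvoid P t a n k ≤ hitAvoid P t a (n + 1) x := by
  cases n with
  | zero => simp [hitAvoid]
  | succ n =>
    rw [hitAvoid]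
    refine le_trans ?_ (ENNReal.le_tsum k)
    simp [hkt, hka]

lemma reflTransGen_of_hitAvoid_ne_zero (h : hitAvoid P t a n x ≠ 0) :
    Relation.ReflTransGen (fun y z ↦ P y z ≠ 0) x t := by
  induction n using Nat.twoStepInduction generalizing x with
  | zero => exact absurd rfl h
  | one => exact .single h
  | more n _ ih =>
    rw [hitAvoid, ne_eq, ENNReal.tsum_eq_zero, not_forall] at h
    obtain ⟨k, hk⟩ := h
    split_ifs at hk
    · exact absurd rfl hk
    · exact .head (left_ne_zero_of_mul hk) (ih (right_ne_zero_of_mul hk))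

lemma mul_momGen_le_momGen (hmono : Monotone f) (hki : k ≠ i) :
    P x k * momGen f P k i ≤ momGen f P x i :=
  calc P x k * momGen f P k i
      = ∑' n, ENNReal.ofReal (f n) * (P x k * firstHit P k i n) := by
        simp only [momGen, ← ENNReal.tsum_mul_left, mul_left_comm]
    _ ≤ ∑' n, ENNReal.ofReal (f (n + 1)) * firstHit P x i (n + 1) := by
        gcongr with n
        · exact hmono n.le_succ
        · exact mul_hitAvoid_le_hitAvoid_succ hki hki n
    _ ≤ momGen f P x i :=
        ENNReal.tsum_comp_le_tsum_of_injective (add_left_injective 1)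
          fun n ↦ ENNReal.ofReal (f n) * firstHit P x i n

lemma momGen_lt_top_of_reflTransGen (hmono : Monotone f) (hfin : momGen f P i i < ⊤)
    (hij : Relation.ReflTransGen (fun x y ↦ P x y ≠ 0) i j) : momGen f P j i < ⊤ := by
  induction hij with
  | refl => exact hfin
  | @tail x k _ hxk hx =>
    obtain rfl | hki := eq_or_ne k i
    · exact hfin
    · exact ENNReal.lt_top_of_mul_ne_top_right
        ((mul_momGen_le_momGen hmono hki).trans_lt hx).ne hxk

end

/-- If `P_x(T_xy = ∞) > 0`, the series `momGen f P x y` is `E[f(T_xy); T_xy < ∞]`. -/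
theorem stmt_8_general (f : ℕ → ℝ) (hmono : Monotone f) (P : E → E → ℝ≥0∞) (i j : E)
    (hij : ∃ n, 0 < firstHit P i j n) (hfin : momGen f P i i < ⊤) : momGen f P j i < ⊤ := by
  obtain ⟨n, hn⟩ := hij
  exact momGen_lt_top_of_reflTransGen hmono hfin (reflTransGen_of_hitAvoid_ne_zero hn.ne')

theorem stmt_8 (f : ℕ → ℝ) (hpos : ∀ n, 0 < f n) (hmono : Monotone f)
    (htop : Tendsto f atTop atTop)
    (S : Type*) [Countable S] (P : S → S → ℝ≥0∞)
    (hP : IsStochastic P) (hirr : IsIrreducible P) (hrec : IsRecurrent P)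
    (i : S) (hfin : momGen f P i i < ⊤) :
    ∀ j : S, momGen f P j i < ⊤ :=
  fun j ↦ stmt_8_general f hmono P i j (hirr i j) hfin

end MCPaper
end
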